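/- Let Z be a real random variable on a probability space (Ω, F, P) with Z > 0 almost surely, and suppose that E[Z^p] = ∞ for some p > 0. Then for every δ > 0 there exists a sequence (y_n) of positive real numbers increasing to +∞ such that lim_{n→∞} y_n^p (ln y_n)^{1+δ} P(Z ≥ y_n) = +∞; in particular, for every C > 0 there exists n₀ such that for all n ≥ n₀, P(Z ≥ y_n) ≥ C / (y_n^p (ln y_n)^{1+δ}). -/

import Mathlib

open MeasureTheory Filter Set

/-! Cut the range of `Z` at the points `e ^ k`: since `Z ^ p ≤ e ^ ((k + 1) p)` on
`{e ^ k ≤ Z < e ^ (k + 1)}`, the divergence of `E[Z ^ p]` forces that of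
`∑ k, e ^ (k p) P(Z ≥ e ^ k)`. If `∑ k, 1 / L (e ^ k)` converges, no multiple of it can dominate the
tail of the divergent series, so `e ^ (k p) L (e ^ k) P(Z ≥ e ^ k)` is unbounded and the `y n` can
be picked among the `e ^ k`. For `L y = (log y) ^ (1 + δ)` one has `L (e ^ k) = k ^ (1 + δ)`. -/

theorem frequently_cofinite_le_mul_of_not_summable {ι : Type*} {a w : ι → ℝ}
    (ha : ∀ i, 0 ≤ a i) (hsum : ¬ Summable a) (hw : ∀ᶠ i in cofinite, 0 < w i)
    (hwsum : Summable fun i => (w i)⁻¹) (C : ℝ) :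
    ∃ᶠ i in cofinite, C ≤ w i * a i := by
  intro hlt
  refine hsum (Summable.of_norm_bounded_eventually (hwsum.mul_left C) ?_)
  filter_upwards [hlt, hw] with i hi hwi
  rw [Real.norm_of_nonneg (ha i), ← div_eq_mul_inv, le_div_iff₀' hwi]
  exact (not_le.mp hi).le

theorem exists_strictMono_tendsto_mul_atTop_of_not_summable {a w : ℕ → ℝ}
    (ha : ∀ k, 0 ≤ a k) (hsum : ¬ Summable a) (hw : ∀ᶠ k in atTop, 0 < w k)
    (hwsum : Summable fun k => (w k)⁻¹) :
    ∃ φ : ℕ → ℕ, StrictMono φ ∧ Tendsto (fun n => w (φ n) * a (φ n)) atTop atTop := by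
  rw [← Nat.cofinite_eq_atTop] at hw
  have hfreq (n : ℕ) : ∃ᶠ k in atTop, (n : ℝ) ≤ w k * a k :=
    Nat.cofinite_eq_atTop ▸ frequently_cofinite_le_mul_of_not_summable ha hsum hw hwsum n
  obtain ⟨φ, hφ, hle⟩ := extraction_forall_of_frequently hfreq
  exact ⟨φ, hφ, tendsto_atTop_mono hle tendsto_natCast_atTop_atTop⟩

theorem eventually_div_le_of_tendsto_mul_atTop {ι : Type*} {l : Filter ι} {b q : ι → ℝ}
    (hq : ∀ i, 0 ≤ q i) (h : Tendsto (fun i => b i * q i) l atTop) {C : ℝ} (hC : 0 < C) :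
    ∀ᶠ i in l, C / b i ≤ q i := by
  filter_upwards [h.eventually_ge_atTop C] with i hi
  exact (div_le_iff₀' (pos_of_mul_pos_left (hC.trans_le hi) (hq i))).mpr hi

section ExponentialLevels

variable {p : ℝ}

theorem ofReal_rpow_le_one_add_tsum_indicator (hp : 0 ≤ p) {z : ℝ} (hz : 0 ≤ z) :
    ENNReal.ofReal (z ^ p) ≤ 1 + ∑' k : ℕ,
      (Ici (Real.exp k)).indicator (fun _ => ENNReal.ofReal (Real.exp ((k + 1) * p))) z := by
  rcases le_or_gt z 1 with hz1 | hz1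
  · exact (ENNReal.ofReal_le_one.mpr (Real.rpow_le_one hz hz1 hp)).trans le_self_add
  · have hzpos : 0 < z := one_pos.trans hz1
    set m := ⌊Real.log z⌋₊
    have hmem : z ∈ Ici (Real.exp m) :=
      (Real.le_log_iff_exp_le hzpos).mp (Nat.floor_le (Real.log_nonneg hz1.le))
    have hrpow : z ^ p ≤ Real.exp ((m + 1) * p) := by
      rw [Real.rpow_def_of_pos hzpos]
      gcongr
      exact (Nat.lt_floor_add_one _).le
    calc ENNReal.ofReal (z ^ p)
        ≤ ENNReal.ofReal (Real.exp ((m + 1) * p)) := ENNReal.ofReal_le_ofReal hrpow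
      _ = (Ici (Real.exp m)).indicator
            (fun _ => ENNReal.ofReal (Real.exp ((m + 1) * p))) z := by
          rw [indicator_of_mem hmem]
      _ ≤ _ := (ENNReal.le_tsum m).trans le_add_self

variable {Ω : Type*} [MeasurableSpace Ω] {μ : Measure Ω} {Z : Ω → ℝ}

theorem lintegral_rpow_le_measure_univ_add_tsum (hZ : AEMeasurable Z μ) (hZ0 : 0 ≤ᵐ[μ] Z)
    (hp : 0 ≤ p) :
    ∫⁻ ω, ENNReal.ofReal (Z ω ^ p) ∂μ ≤ μ univ + ∑' k : ℕ,
      ENNReal.ofReal (Real.exp ((k + 1) * p)) * μ {ω | Real.exp k ≤ Z ω} := by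
  let f (k : ℕ) : ℝ → ENNReal :=
    (Ici (Real.exp k)).indicator fun _ => ENNReal.ofReal (Real.exp ((k + 1) * p))
  have hf (k : ℕ) : AEMeasurable (fun ω => f k (Z ω)) μ :=
    (measurable_const.indicator measurableSet_Ici).comp_aemeasurable hZ
  have hint (k : ℕ) : ∫⁻ ω, f k (Z ω) ∂μ =
      ENNReal.ofReal (Real.exp ((k + 1) * p)) * μ {ω | Real.exp k ≤ Z ω} :=
    lintegral_indicator_const₀ (hZ.nullMeasurable measurableSet_Ici) _
  calc ∫⁻ ω, ENNReal.ofReal (Z ω ^ p) ∂μ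
      ≤ ∫⁻ ω, 1 + ∑' k, f k (Z ω) ∂μ :=
        lintegral_mono_ae (hZ0.mono fun _ hω => ofReal_rpow_le_one_add_tsum_indicator hp hω)
    _ = μ univ + ∑' k, ∫⁻ ω, f k (Z ω) ∂μ := by
        rw [lintegral_add_left measurable_const, lintegral_one, lintegral_tsum hf]
    _ = _ := by simp_rw [hint]

theorem not_summable_exp_mul_measureReal [IsFiniteMeasure μ] (hZ : AEMeasurable Z μ)
    (hZ0 : 0 ≤ᵐ[μ] Z) (hp : 0 ≤ p) (hZp : ∫⁻ ω, ENNReal.ofReal (Z ω ^ p) ∂μ = ⊤) :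
    ¬ Summable fun k : ℕ => Real.exp k ^ p * μ.real {ω | Real.exp k ≤ Z ω} := by
  intro hsum
  have hterm (k : ℕ) :
      ENNReal.ofReal (Real.exp p * (Real.exp k ^ p * μ.real {ω | Real.exp k ≤ Z ω})) =
        ENNReal.ofReal (Real.exp ((k + 1) * p)) * μ {ω | Real.exp k ≤ Z ω} := by
    have hexp : Real.exp p * Real.exp k ^ p = Real.exp ((k + 1) * p) := by
      rw [← Real.exp_mul, ← Real.exp_add]
      ring_nf
    rw [← mul_assoc, hexp, ENNReal.ofReal_mul (Real.exp_nonneg _), ofReal_measureReal]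
  have hfin := (hsum.mul_left (Real.exp p)).tsum_ofReal_ne_top
  simp_rw [hterm] at hfin
  have hle := lintegral_rpow_le_measure_univ_add_tsum hZ hZ0 hp
  rw [hZp, top_le_iff] at hle
  exact ENNReal.add_ne_top.mpr ⟨measure_ne_top μ univ, hfin⟩ hle

end ExponentialLevels

theorem stmt2_general {Ω : Type*} [MeasurableSpace Ω] (μ : Measure Ω) [IsFiniteMeasure μ]
    {Z : Ω → ℝ} (hZ : AEMeasurable Z μ) (hZ0 : 0 ≤ᵐ[μ] Z) {p : ℝ} (hp : 0 ≤ p)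
    (hZp : ∫⁻ ω, ENNReal.ofReal (Z ω ^ p) ∂μ = ⊤)
    {L : ℝ → ℝ} (hL : ∀ᶠ k : ℕ in atTop, 0 < L (Real.exp k))
    (hLsum : Summable fun k : ℕ => (L (Real.exp k))⁻¹) :
    ∃ y : ℕ → ℝ, (∀ n, 0 < y n) ∧ StrictMono y ∧ Tendsto y atTop atTop ∧
      Tendsto (fun n => y n ^ p * L (y n) * μ.real {ω | y n ≤ Z ω}) atTop atTop ∧
      ∀ C > (0 : ℝ), ∀ᶠ n in atTop, C / (y n ^ p * L (y n)) ≤ μ.real {ω | y n ≤ Z ω} := by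
  obtain ⟨φ, hφ, hlim⟩ := exists_strictMono_tendsto_mul_atTop_of_not_summable
    (fun k => by positivity) (not_summable_exp_mul_measureReal hZ hZ0 hp hZp) hL hLsum
  have hlim' : Tendsto (fun n => Real.exp (φ n) ^ p * L (Real.exp (φ n)) *
      μ.real {ω | Real.exp (φ n) ≤ Z ω}) atTop atTop :=
    hlim.congr fun n => by ring
  exact ⟨fun n => Real.exp (φ n), fun n => Real.exp_pos _,
    Real.exp_strictMono.comp (Nat.strictMono_cast.comp hφ),
    Real.tendsto_exp_atTop.comp (tendsto_natCast_atTop_atTop.comp hφ.tendsto_atTop), hlim',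
    fun C hC => eventually_div_le_of_tendsto_mul_atTop (fun _ => measureReal_nonneg) hlim' hC⟩

theorem eventually_log_exp_natCast_rpow_pos (s : ℝ) :
    ∀ᶠ k : ℕ in atTop, 0 < Real.log (Real.exp k) ^ s := by
  filter_upwards [eventually_gt_atTop 0] with k hk
  rw [Real.log_exp]
  positivity

theorem summable_inv_log_exp_natCast_rpow {s : ℝ} (hs : 1 < s) :
    Summable fun k : ℕ => (Real.log (Real.exp k) ^ s)⁻¹ := by
  simpa only [Real.log_exp] using Real.summable_nat_rpow_inv.mpr hs

/-- If `Z > 0` a.s. and `E[Z^p] = ∞` for some `p > 0`, then for every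
`δ > 0` there exists a sequence `(y_n)` of positive reals increasing to `+∞` such that
`y_n^p (ln y_n)^{1+δ} P(Z ≥ y_n) → ∞`; in particular, for every `C > 0` there is `n₀`
with `P(Z ≥ y_n) ≥ C / (y_n^p (ln y_n)^{1+δ})` for all `n ≥ n₀`. -/
theorem stmt2 {Ω : Type*} [MeasurableSpace Ω] (P : Measure Ω) [IsProbabilityMeasure P]
    (Z : Ω → ℝ) (hZmeas : Measurable Z) (hZpos : ∀ᵐ ω ∂P, 0 < Z ω)
    (p : ℝ) (hp : 0 < p)
    (hZp : ∫⁻ ω, ENNReal.ofReal (Z ω ^ p) ∂P = ⊤) :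
    ∀ δ > (0 : ℝ), ∃ y : ℕ → ℝ,
      (∀ n, 0 < y n) ∧ Monotone y ∧ Tendsto y atTop atTop ∧
      Tendsto (fun n => y n ^ p * Real.log (y n) ^ (1 + δ) *
        (P {ω | y n ≤ Z ω}).toReal) atTop atTop ∧
      (∀ C > (0 : ℝ), ∃ n₀ : ℕ, ∀ n ≥ n₀,
        (P {ω | y n ≤ Z ω}).toReal ≥ C / (y n ^ p * Real.log (y n) ^ (1 + δ))) := by
  intro δ hδ
  obtain ⟨y, hpos, hmono, htop, hlim, hle⟩ := stmt2_general P hZmeas.aemeasurable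
    (hZpos.mono fun _ => le_of_lt) hp.le hZp (L := fun t => Real.log t ^ (1 + δ))
    (eventually_log_exp_natCast_rpow_pos (1 + δ))
    (summable_inv_log_exp_natCast_rpow (lt_add_of_pos_right 1 hδ))
  exact ⟨y, hpos, hmono.monotone, htop, hlim, fun C hC => eventually_atTop.mp (hle C hC)⟩
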